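/- arXiv:2103.14726 — 6 statements merged into one kernel-verified Lean document; each statement's English description precedes it below -/
import Mathlib

section
/- Let G be a finite simple graph on vertex set [n] with edge set E of size m̂, let A(G) be its adjacency matrix, D the n×n diagonal matrix with D_{i,i} = deg_G(i), and A(L(G)) the m̂×m̂ adjacency matrix of the line graph of G. Then, as polynomials over ℝ, X^n · charpoly(A(L(G)) + 2·I_{m̂}) = X^{m̂} · charpoly(A(G) + D). Equivalently, the spectrum of A(L(G)) is obtained from the multiset σ(A(G)+D) − 2 by adding m̂ − n copies of the eigenvalue −2 when m̂ ≥ n, and by deleting n − m̂ copies of −2 when m̂ < n. -/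
open scoped Classical
open Matrix Polynomial

noncomputable section

/-- The adjacency matrix (over `ℝ`) of the line graph of `G`: rows and columns are indexed by
the edges of `G`, with entry `1` when the two edges are distinct and share an endpoint. -/
def lineGraphAdjMatrix {V : Type*} (G : SimpleGraph V) [Fintype G.edgeSet] :
    Matrix G.edgeSet G.edgeSet ℝ :=
  fun e f => if (G.lineGraph).Adj e f then 1 else 0

/-- Unsigned incidence matrix with columns restricted to the edges. -/
def incB {n : ℕ} (G : SimpleGraph (Fin n)) : Matrix (Fin n) G.edgeSet ℝ :=
  fun v e => if v ∈ (e : Sym2 (Fin n)) then 1 else 0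

theorem incB_transpose_mul {n : ℕ} (G : SimpleGraph (Fin n)) [Fintype G.edgeSet] :
    (incB G)ᵀ * incB G
      = lineGraphAdjMatrix G + (2 : ℝ) • (1 : Matrix G.edgeSet G.edgeSet ℝ) := by
  ext ⟨e, he⟩ ⟨f, hf⟩
  simp only [Matrix.mul_apply, Matrix.transpose_apply, incB, Matrix.add_apply, Matrix.smul_apply,
    lineGraphAdjMatrix, SimpleGraph.lineGraph_adj_iff_exists, Matrix.one_apply, smul_eq_mul,
    ← ite_and, mul_ite, mul_one, mul_zero]
  rw [Finset.sum_boole]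
  by_cases hef : e = f
  · subst hef
    induction e with
    | _ a b =>
      have hab : a ≠ b := G.ne_of_adj he
      have : (Finset.univ.filter fun x => x ∈ s(a, b) ∧ x ∈ s(a, b)) = {a, b} := by
        ext x; simp
      rw [this, Finset.card_pair hab]
      simp
  · by_cases hx : ∃ v, v ∈ e ∧ v ∈ f
    · obtain ⟨v, hv, hv'⟩ := hx
      have : (Finset.univ.filter fun x => x ∈ f ∧ x ∈ e) = {v} := by
        ext x
        simp only [Finset.mem_filter, Finset.mem_univ, true_and, Finset.mem_singleton]
        constructor
        · rintro ⟨h1, h2⟩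
          by_contra hne
          exact hef (Sym2.eq_of_ne_mem hne h2 hv h1 hv')
        · rintro rfl
          exact ⟨hv', hv⟩
      rw [this, if_pos ⟨by simpa using hef, v, hv, hv'⟩]
      simp [hef]
    · have : (Finset.univ.filter fun x => x ∈ f ∧ x ∈ e) = ∅ := by
        ext x
        simp only [Finset.mem_filter, Finset.mem_univ, true_and, Finset.notMem_empty, iff_false]
        exact fun h => hx ⟨x, h.2, h.1⟩
      rw [this, if_neg (fun h => hx h.2)]
      simp [hef]

theorem incB_mul_transpose {n : ℕ} (G : SimpleGraph (Fin n)) [DecidableRel G.Adj] :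
    incB G * (incB G)ᵀ
      = G.adjMatrix ℝ + Matrix.diagonal (fun i => (G.degree i : ℝ)) := by
  have h : incB G * (incB G)ᵀ = G.incMatrix ℝ * (G.incMatrix ℝ)ᵀ := by
    ext a b
    simp only [Matrix.mul_apply, Matrix.transpose_apply]
    have h0 : ∀ (v : Fin n) (e : G.edgeSet), incB G v e = G.incMatrix ℝ v e := by
      rintro v ⟨e, he⟩
      simp [incB, SimpleGraph.incMatrix_apply', SimpleGraph.incidenceSet, he]
    simp only [h0]
    refine Finset.sum_of_injOn Subtype.val (Subtype.val_injective.injOn) (by simp) ?_ (by simp)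
    intro e _ he
    have he' : e ∉ G.edgeSet := by
      intro h
      exact he ⟨⟨e, h⟩, by simp, rfl⟩
    rw [G.incMatrix_of_notMem_incidenceSet (fun h => he' h.1), zero_mul]
  rw [h, SimpleGraph.incMatrix_mul_transpose]
  ext a b
  by_cases hab : a = b
  · subst hab; simp
  · simp [hab, SimpleGraph.adjMatrix_apply]

/-- For a finite simple graph `G` on `n` vertices with `m̂` edges,
`X^n · charpoly(A(L(G)) + 2 I) = X^m̂ · charpoly(A(G) + D)`, where `D` is the diagonal
matrix of vertex degrees.  Consequently the spectrum of `A(L(G))` is obtained from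
`σ(A(G)+D) − 2` by adding `m̂ − n` copies of `−2` (or deleting `n − m̂` copies of `−2`). -/
theorem lineGraph_charpoly {n : ℕ} (G : SimpleGraph (Fin n)) [DecidableRel G.Adj] :
    X ^ n * (lineGraphAdjMatrix G + (2 : ℝ) • (1 : Matrix G.edgeSet G.edgeSet ℝ)).charpoly
      = X ^ G.edgeFinset.card *
        (G.adjMatrix ℝ + Matrix.diagonal (fun i => (G.degree i : ℝ))).charpoly := by
  have h := Matrix.charpoly_mul_comm' (incB G) (incB G)ᵀ
  rw [incB_transpose_mul, incB_mul_transpose] at h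
  rw [SimpleGraph.edgeFinset_card]
  simpa using h.symm
end
end

section
/- Let n ≥ 3 and let K_n be the complete graph on n vertices, with A(L(K_n)) the adjacency matrix of its line graph (a symmetric matrix of order C(n,2)). Then charpoly(A(L(K_n))) = (X − (2n−4)) · (X − (n−4))^{n−1} · (X + 2)^{C(n,2)−n}; that is, the eigenvalues of A(L(K_n)) are 2n−4 (simple), n−4 with multiplicity n−1, and −2 with multiplicity C(n,2)−n. -/
open scoped Classical
open Matrix Polynomial

noncomputable section

/-- Edge-vertex incidence matrix of the complete graph. -/
def incKn (n : ℕ) : Matrix (⊤ : SimpleGraph (Fin n)).edgeSet (Fin n) ℝ :=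
  fun e v => if v ∈ e.1 then 1 else 0

lemma incKn_mul_transpose (n : ℕ) :
    lineGraphAdjMatrix (⊤ : SimpleGraph (Fin n))
      = incKn n * (incKn n)ᵀ - Matrix.scalar _ (2 : ℝ) := by
  ext ⟨e, he⟩ ⟨f, hf⟩
  induction e using Sym2.ind with | _ a b
  induction f using Sym2.ind with | _ c d
  have hab : a ≠ b := by simpa using he
  have key : (incKn n * (incKn n)ᵀ) ⟨s(a, b), he⟩ ⟨s(c, d), hf⟩
      = (if a = c ∨ a = d then 1 else 0) + (if b = c ∨ b = d then (1 : ℝ) else 0) := by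
    simp only [Matrix.mul_apply, Matrix.transpose_apply, incKn, Sym2.mem_iff]
    rw [← Finset.sum_subset (Finset.subset_univ {a, b}), Finset.sum_pair hab]
    · simp
    · intro x _ hx
      simp at hx
      simp [hx]
  have adj : (⊤ : SimpleGraph (Fin n)).lineGraph.Adj ⟨s(a, b), he⟩ ⟨s(c, d), hf⟩
      ↔ ¬ (a = c ∧ b = d ∨ a = d ∧ b = c) ∧ ((a = c ∨ a = d) ∨ (b = c ∨ b = d)) := by
    rw [SimpleGraph.lineGraph_adj_iff_exists]
    rw [Ne, Subtype.mk.injEq, Sym2.eq_iff]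
    simp [Sym2.mem_iff]
  rw [Matrix.sub_apply, key, lineGraphAdjMatrix]
  simp only [adj, Matrix.scalar_apply, Matrix.diagonal_apply, Subtype.mk.injEq, Sym2.eq_iff]
  have hcd : c ≠ d := by simpa using hf
  split_ifs <;> grind

lemma incKn_transpose_mul (n : ℕ) :
    (incKn n)ᵀ * incKn n
      = vecMulVec (fun _ => 1) (fun _ => 1) - Matrix.scalar _ (-((n : ℝ) - 2)) := by
  ext a b
  simp only [Matrix.mul_apply, Matrix.transpose_apply, incKn, Matrix.sub_apply,
    Matrix.scalar_apply, Matrix.diagonal_apply, vecMulVec_apply]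
  by_cases h : a = b
  · subst h
    have := SimpleGraph.card_incidenceSet_eq_degree (⊤ : SimpleGraph (Fin n)) a
    rw [SimpleGraph.complete_graph_degree, Fintype.card_fin] at this
    have hn : 1 ≤ n := by have := a.2; omega
    have h2 : Fintype.card {e : (⊤ : SimpleGraph (Fin n)).edgeSet // a ∈ e.1} = n - 1 := by
      rw [← this]
      exact Fintype.card_congr 
        { toFun := fun e => ⟨e.1.1, e.1.2, e.2⟩
          invFun := fun e => ⟨⟨e.1, e.2.1⟩, e.2.2⟩
          left_inv := fun _ => rfl
          right_inv := fun _ => rfl }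
    rw [Fintype.card_subtype] at h2
    simp only [mul_ite, mul_one, mul_zero, if_true]
    have h3 : ∀ e : (⊤ : SimpleGraph (Fin n)).edgeSet,
        (if a ∈ e.1 then (if a ∈ e.1 then (1 : ℝ) else 0) else 0) = if a ∈ e.1 then 1 else 0 := by
      intro e; split_ifs <;> rfl
    rw [Finset.sum_congr rfl (fun e _ => h3 e), Finset.sum_boole, h2]
    push_cast [hn]
    ring
  · have : ∀ e : (⊤ : SimpleGraph (Fin n)).edgeSet,
      ((if a ∈ e.1 then (1 : ℝ) else 0) * (if b ∈ e.1 then 1 else 0)) =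
        if e = ⟨s(a, b), by simpa using h⟩ then 1 else 0 := by
      rintro ⟨e, he⟩
      simp only [Subtype.mk.injEq, ← Sym2.mem_and_mem_iff h]
      by_cases h1 : a ∈ e <;> by_cases h2 : b ∈ e <;> simp [h1, h2]
    rw [Finset.sum_congr rfl (fun e _ => this e)]
    simp [h]

/-- For `n ≥ 3`, the characteristic polynomial of the adjacency matrix of the
line graph of the complete graph `K_n` is
`(X − (2n−4)) · (X − (n−4))^{n−1} · (X + 2)^{C(n,2)−n}`; that is, its eigenvalues are `2n−4`
(simple), `n−4` with multiplicity `n−1`, and `−2` with multiplicity `C(n,2)−n`. -/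
theorem lineGraph_complete_charpoly {n : ℕ} (hn : 3 ≤ n) :
    (lineGraphAdjMatrix (⊤ : SimpleGraph (Fin n))).charpoly
      = (X - C (2 * (n : ℝ) - 4)) * (X - C ((n : ℝ) - 4)) ^ (n - 1)
          * (X + C 2) ^ (n.choose 2 - n) := by
  have hcard : Fintype.card (⊤ : SimpleGraph (Fin n)).edgeSet = n.choose 2 := by
    have := SimpleGraph.card_edgeFinset_top_eq_card_choose_two (V := Fin n)
    rw [SimpleGraph.edgeFinset, Set.toFinset_card] at this
    convert this using 1
    simp
  have hle : n ≤ n.choose 2 := by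
    rw [Nat.choose_two_right, Nat.le_div_iff_mul_le (by norm_num)]
    exact Nat.mul_le_mul_left _ (by omega)
  have hne : Nonempty (Fin n) := ⟨⟨0, by omega⟩⟩
  rw [incKn_mul_transpose, charpoly_sub_scalar,
    charpoly_mul_comm_of_le _ _ (by rw [hcard, Fintype.card_fin]; exact hle), incKn_transpose_mul,
    charpoly_sub_scalar, charpoly_vecMulVec]
  rw [hcard, Fintype.card_fin]
  have hdot : ((fun _ => 1 : Fin n → ℝ) ⬝ᵥ fun _ => 1) = n := by simp [dotProduct]
  rw [hdot]
  generalize n.choose 2 - n = m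
  obtain ⟨k, rfl⟩ : ∃ k, n = k + 1 := ⟨n - 1, by omega⟩
  have e1 : (X : ℝ[X]) + C 2 + C (-(((k + 1 : ℕ) : ℝ) - 2)) = X - C (((k + 1 : ℕ) : ℝ) - 4) := by
    rw [sub_eq_add_neg X, add_assoc, ← C_add, ← C_neg]
    congr 2
    ring
  have e2 : (X : ℝ[X]) - C (2 * ((k + 1 : ℕ) : ℝ) - 4)
      = X - C (((k + 1 : ℕ) : ℝ) - 4) - C ((k + 1 : ℕ) : ℝ) := by
    rw [sub_sub, ← C_add]
    congr 2
    ring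
  rw [e2]
  simp only [mul_comp, sub_comp, pow_comp, X_comp, smul_comp, add_comp, C_comp, e1,
    smul_eq_C_mul, Nat.add_sub_cancel]
  ring
end
end

section
/- Let [n] be partitioned into clusters C_1,…,C_k with |C_r| = n_r ≥ 2, and let M = Qᵀ A(L(K_n)) Q where Q is the associated block-indicator matrix. Then charpoly(M) = (X − (2n−4)) · (X − (n−4))^{k−1} · (X + 2)^{C(k,2)}; that is, the eigenvalues of M are 2n−4 (simple), n−4 with multiplicity k−1, and −2 with multiplicity C(k,2). -/
open scoped Classical
open Matrix

noncomputable section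

/-- The edges of the complete graph `K_n`: unordered pairs of distinct elements of `Fin n`. -/
def CompleteEdge (n : ℕ) : Type := {e : Sym2 (Fin n) // ¬ e.IsDiag}

instance (n : ℕ) : Fintype (CompleteEdge n) := Subtype.fintype _
instance (n : ℕ) : DecidableEq (CompleteEdge n) := Subtype.instDecidableEq

/-- The adjacency matrix of the line graph of the complete graph `K_n`: rows and columns are
indexed by the edges of `K_n`, with entry `1` exactly when the two edges are distinct and share
an endpoint. -/
def ALK (n : ℕ) : Matrix (CompleteEdge n) (CompleteEdge n) ℝ :=
  fun e f => if e ≠ f ∧ ∃ v, v ∈ e.1 ∧ v ∈ f.1 then 1 else 0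

variable {n k : ℕ}

/-- The block of the induced edge partition to which an edge belongs: the unordered pair of
clusters of its two endpoints. Blocks are indexed by `Sym2 (Fin k)`, which has
cardinality `C(k+1,2)`. -/
def blkOf (c : Fin n → Fin k) (e : CompleteEdge n) : Sym2 (Fin k) := Sym2.map c e.1

/-- The size `m_{r,s}` of a block of the induced edge partition. -/
def blkSize (c : Fin n → Fin k) (b : Sym2 (Fin k)) : ℕ :=
  (Finset.univ.filter (fun e : CompleteEdge n => blkOf c e = b)).card

/-- The block-indicator matrix `Q` of the induced edge partition:
`Q_{e,(r,s)} = m_{r,s}^{-1/2}` if `e ∈ C_{(r,s)}` and `0` otherwise. -/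
def Qmat (c : Fin n → Fin k) : Matrix (CompleteEdge n) (Sym2 (Fin k)) ℝ :=
  fun e b => if blkOf c e = b then 1 / Real.sqrt (blkSize c b) else 0

/-- `M = Qᵀ A(L(K_n)) Q`. -/
def Mmat (c : Fin n → Fin k) : Matrix (Sym2 (Fin k)) (Sym2 (Fin k)) ℝ :=
  (Qmat c)ᵀ * ALK n * Qmat c

/-- The size of the cluster `C_r`. -/
def clusterSize (c : Fin n → Fin k) (r : Fin k) : ℕ :=
  (Finset.univ.filter (fun i => c i = r)).card

/-- Vertex-edge incidence matrix. -/
def Bm (n : ℕ) : Matrix (Fin n) (CompleteEdge n) ℝ := fun i e => if i ∈ e.1 then 1 else 0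

theorem sum_mem_edge (e : CompleteEdge n) (g : Fin n → ℝ) (a b : Fin n) (h : e.1 = s(a, b)) :
    ∑ i, (if i ∈ e.1 then 1 else 0) * g i = g a + g b := by
  have hab : a ≠ b := by
    have := e.2
    rw [h] at this
    simpa using this
  have : ∀ i, (if i ∈ e.1 then (1 : ℝ) else 0) * g i
      = (if i = a then g i else 0) + (if i = b then g i else 0) := by
    intro i
    rw [h]
    by_cases h1 : i = a
    · subst h1; simp [hab]
    · by_cases h2 : i = b
      · subst h2; simp [h1]
      · simp [h1, h2]
  simp [this, Finset.sum_add_distrib]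

theorem edge_rep (e : CompleteEdge n) : ∃ x y, e.1 = s(x, y) := by
  obtain ⟨⟨x, y⟩, _⟩ := e
  exact ⟨x, y, rfl⟩

theorem ALK_eq : ALK n = (Bm n)ᵀ * Bm n - scalar _ 2 := by
  ext e f
  obtain ⟨a, b, he⟩ := edge_rep e
  have hab : a ≠ b := by
    have := e.2
    rw [he] at this
    simpa using this
  have key : ((Bm n)ᵀ * Bm n) e f
      = (if a ∈ f.1 then 1 else 0) + (if b ∈ f.1 then 1 else 0) := by
    rw [Matrix.mul_apply]
    exact sum_mem_edge e (fun i => if i ∈ f.1 then 1 else 0) a b he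
  rw [Matrix.sub_apply, key]
  have hx : (∃ v, v ∈ e.1 ∧ v ∈ f.1) ↔ (a ∈ f.1 ∨ b ∈ f.1) := by
    rw [he]
    constructor
    · rintro ⟨v, hv, hv'⟩
      rcases Sym2.mem_iff.1 hv with rfl | rfl
      · exact Or.inl hv'
      · exact Or.inr hv'
    · rintro (h | h)
      · exact ⟨a, by simp, h⟩
      · exact ⟨b, by simp, h⟩
  have hy : e = f ↔ (a ∈ f.1 ∧ b ∈ f.1) := by
    constructor
    · intro h; rw [← h, he]; simp
    · rintro ⟨h1, h2⟩
      exact Subtype.ext (he.trans ((Sym2.mem_and_mem_iff hab).1 ⟨h1, h2⟩).symm)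
  simp only [ALK, hx, ne_eq, scalar_apply, diagonal_apply]
  by_cases h1 : a ∈ f.1 <;> by_cases h2 : b ∈ f.1 <;> simp [h1, h2, hy] <;> norm_num

theorem sum_edge_at (i : Fin n) (F : Sym2 (Fin n) → ℝ) :
    ∑ e : CompleteEdge n, (if i ∈ e.1 then F e.1 else 0)
      = ∑ j, if j ≠ i then F s(i, j) else 0 := by
  rw [← Finset.sum_filter, ← Finset.sum_filter]
  symm
  refine Finset.sum_bij (fun j hj => (⟨s(i, j), by
    have := (Finset.mem_filter.1 hj).2
    simpa using this.symm⟩ : CompleteEdge n)) ?_ ?_ ?_ ?_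
  · intro j hj
    exact Finset.mem_filter.2 ⟨Finset.mem_univ _, by simp⟩
  · intro j hj j' hj' h
    exact Sym2.congr_right.1 (Subtype.ext_iff.1 h)
  · intro e he
    have h := (Finset.mem_filter.1 he).2
    obtain ⟨j, hj⟩ := h
    refine ⟨j, Finset.mem_filter.2 ⟨Finset.mem_univ _, ?_⟩, Subtype.ext hj.symm⟩
    have := e.2
    rw [hj] at this
    rintro rfl
    simp at this
  · intros; rfl

/-- number of neighbours of a vertex of cluster `r` along block `b`. -/
def dg (c : Fin n → Fin k) (r : Fin k) (b : Sym2 (Fin k)) : ℝ :=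
  ∑ t, if s(r, t) = b then ((clusterSize c t : ℝ) - if t = r then 1 else 0) else 0

theorem dg_mk (c : Fin n → Fin k) (r t : Fin k) :
    dg c r s(r, t) = (clusterSize c t : ℝ) - if t = r then 1 else 0 := by
  have : ∀ u, s(r, u) = s(r, t) ↔ u = t := fun u => Sym2.congr_right
  simp only [dg, this]
  simp

theorem dg_zero (c : Fin n → Fin k) (r : Fin k) (b : Sym2 (Fin k)) (h : r ∉ b) :
    dg c r b = 0 := by
  apply Finset.sum_eq_zero
  intro t _
  rw [if_neg]
  rintro rfl
  simp at h

theorem sum_cluster (c : Fin n → Fin k) (g : Fin k → ℝ) :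
    ∑ i, g (c i) = ∑ r, (clusterSize c r : ℝ) * g r := by
  rw [← Finset.sum_fiberwise (s := Finset.univ) (g := c)]
  refine Finset.sum_congr rfl fun r _ => ?_
  rw [Finset.sum_congr rfl (g := fun _ => g r)
    (fun i hi => by rw [(Finset.mem_filter.1 hi).2])]
  simp [clusterSize]

theorem deg_eq (c : Fin n → Fin k) (i : Fin n) (b : Sym2 (Fin k)) :
    ∑ e : CompleteEdge n, (if i ∈ e.1 then (if blkOf c e = b then (1 : ℝ) else 0) else 0)
      = dg c (c i) b := by
  rw [show (∑ e : CompleteEdge n, (if i ∈ e.1 then (if blkOf c e = b then (1 : ℝ) else 0) else 0))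
    = _ from sum_edge_at i (fun z => if Sym2.map c z = b then (1 : ℝ) else 0)]
  have h1 : ∀ j, (if j ≠ i then (if Sym2.map c s(i, j) = b then (1 : ℝ) else 0) else 0)
      = (if s(c i, c j) = b then (1 : ℝ) else 0)
        - if j = i then (if s(c i, c i) = b then (1 : ℝ) else 0) else 0 := by
    intro j
    by_cases h : j = i
    · subst h; simp
    · by_cases h' : s(c i, c j) = b <;> simp [h, h']
  simp only [h1, Finset.sum_sub_distrib]
  rw [sum_cluster c (fun t => if s(c i, t) = b then (1 : ℝ) else 0)]
  have h2 : ∀ t, (if s(c i, t) = b then ((clusterSize c t : ℝ) - if t = c i then 1 else 0) else 0)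
      = (clusterSize c t : ℝ) * (if s(c i, t) = b then (1 : ℝ) else 0)
        - if t = c i then (if s(c i, c i) = b then (1 : ℝ) else 0) else 0 := by
    intro t
    by_cases h : t = c i
    · subst h; by_cases h' : s(c i, c i) = b <;> simp [h']
    · simp [h]
  simp only [dg, h2, Finset.sum_sub_distrib]
  simp

theorem handshake (c : Fin n → Fin k) (b : Sym2 (Fin k)) :
    2 * (blkSize c b : ℝ) = ∑ r, (clusterSize c r : ℝ) * dg c r b := by
  rw [← sum_cluster c (fun r => dg c r b)]
  simp only [← deg_eq]
  rw [Finset.sum_comm]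
  have : ∀ e : CompleteEdge n, ∑ i, (if i ∈ e.1 then (if blkOf c e = b then (1 : ℝ) else 0) else 0)
      = if blkOf c e = b then 2 else 0 := by
    intro e
    obtain ⟨x, y, hxy⟩ : ∃ x y, e.1 = s(x, y) := by
      obtain ⟨⟨x, y⟩, _⟩ := e
      exact ⟨x, y, rfl⟩
    have := sum_mem_edge e (fun _ => if blkOf c e = b then (1 : ℝ) else 0) x y hxy
    simp only [ite_mul, one_mul, zero_mul] at this
    rw [this]
    split_ifs <;> norm_num
  simp only [this]
  rw [← Finset.sum_filter]
  simp [blkSize, mul_comm]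

theorem blk_mk (c : Fin n → Fin k) (r t : Fin k) :
    (clusterSize c r : ℝ) * dg c r s(r, t) = (if t = r then 2 else 1) * (blkSize c s(r, t) : ℝ) := by
  have h := handshake c s(r, t)
  by_cases htr : t = r
  · subst htr
    rw [Finset.sum_eq_single t] at h
    · simp [h]
    · intro s _ hs
      rw [dg_zero _ _ _ (by simpa using hs), mul_zero]
    · simp
  · rw [Finset.sum_eq_add r t (Ne.symm htr)] at h
    · rw [dg_mk] at h ⊢
      rw [Sym2.eq_swap, dg_mk, Sym2.eq_swap] at h
      simp only [htr, Ne.symm htr, if_false] at h ⊢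
      linarith
    · rintro s _ ⟨h1, h2⟩
      rw [dg_zero _ _ _ (by simp [h1, h2]), mul_zero]
    · simp
    · simp

theorem blk_pos (c : Fin n → Fin k) (hsz : ∀ r, 2 ≤ clusterSize c r) (b : Sym2 (Fin k)) :
    0 < (blkSize c b : ℝ) := by
  obtain ⟨r, t⟩ := b
  change 0 < (blkSize c s(r, t) : ℝ)
  have h := blk_mk c r t
  rw [dg_mk] at h
  have h1 : (2 : ℝ) ≤ clusterSize c r := by exact_mod_cast hsz r
  have h2 : (2 : ℝ) ≤ clusterSize c t := by exact_mod_cast hsz t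
  split_ifs at h <;> nlinarith

/-- Reduced incidence matrix. -/
def Wm (c : Fin n → Fin k) : Matrix (Fin k) (Sym2 (Fin k)) ℝ :=
  fun r b => dg c r b * (1 / Real.sqrt (blkSize c b))

theorem BQ_apply (c : Fin n → Fin k) (i : Fin n) (b : Sym2 (Fin k)) :
    (Bm n * Qmat c) i b = Wm c (c i) b := by
  rw [Matrix.mul_apply, Wm, ← deg_eq, Finset.sum_mul]
  refine Finset.sum_congr rfl fun e _ => ?_
  simp only [Bm, Qmat]
  split_ifs <;> simp

theorem QtQ (c : Fin n → Fin k) (hsz : ∀ r, 2 ≤ clusterSize c r) :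
    (Qmat c)ᵀ * Qmat c = 1 := by
  ext a b
  rw [Matrix.mul_apply]
  have hp := blk_pos c hsz b
  have : ∀ e, (Qmat c)ᵀ a e * Qmat c e b
      = if blkOf c e = b then (if a = b then 1 / (blkSize c b : ℝ) else 0) else 0 := by
    intro e
    simp only [Qmat, transpose_apply]
    by_cases h : blkOf c e = b
    · by_cases h' : a = b
      · subst h'
        have : Real.sqrt (blkSize c a) * Real.sqrt (blkSize c a) = blkSize c a :=
          Real.mul_self_sqrt hp.le
        simp only [h, if_true]
        rw [div_mul_div_comm, this, one_mul]
      · simp [h, h', Ne.symm h']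
    · simp [h]
  simp only [this]
  rw [← Finset.sum_filter, Finset.sum_const, ← blkSize, nsmul_eq_mul, Matrix.one_apply]
  split_ifs
  · field_simp
  · simp

theorem Mmat_eq (c : Fin n → Fin k) (hsz : ∀ r, 2 ≤ clusterSize c r) :
    Mmat c = (Wm c)ᵀ * (diagonal (fun r => (clusterSize c r : ℝ)) * Wm c) - scalar _ 2 := by
  have h0 : Mmat c = (Bm n * Qmat c)ᵀ * (Bm n * Qmat c) - scalar _ 2 := by
    rw [Mmat, ALK_eq, Matrix.mul_sub, Matrix.sub_mul, Matrix.transpose_mul]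
    congr 1
    · simp only [Matrix.mul_assoc]
    · have h1 : (scalar (CompleteEdge n) (2 : ℝ)) = (2 : ℝ) • 1 := by
        ext; simp [Matrix.one_apply, diagonal_apply]
      have h2 : (scalar (Sym2 (Fin k)) (2 : ℝ)) = (2 : ℝ) • 1 := by
        ext; simp [Matrix.one_apply, diagonal_apply]
      rw [h1, h2, Matrix.mul_smul, Matrix.mul_one, Matrix.smul_mul, QtQ c hsz]
  rw [h0]
  congr 1
  ext a b
  rw [Matrix.mul_apply, Matrix.mul_apply]
  simp only [transpose_apply, BQ_apply, diagonal_mul]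
  rw [sum_cluster c (fun r => Wm c r a * Wm c r b)]
  exact Finset.sum_congr rfl fun _ _ => by ring

theorem sum_sym2_mem (r : Fin k) (f : Sym2 (Fin k) → ℝ) (h : ∀ b, r ∉ b → f b = 0) :
    ∑ b, f b = ∑ t, f s(r, t) := by
  have hinj : Function.Injective (fun t => s(r, t)) := by
    intro t t' h; exact Sym2.congr_right.1 h
  symm
  apply Finset.sum_of_injOn (fun t => s(r, t)) hinj.injOn (by simp)
  · intro b _ hb
    apply h
    rintro ⟨t, rfl⟩
    simp at hb
  · intros; rfl

theorem sum_clusterSize (c : Fin n → Fin k) : ∑ r, (clusterSize c r : ℝ) = n := by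
  have := sum_cluster c (fun _ => 1)
  simp at this
  exact this.symm

theorem DWWt (c : Fin n → Fin k) (hsz : ∀ r, 2 ≤ clusterSize c r) :
    (diagonal (fun r => (clusterSize c r : ℝ)) * Wm c) * (Wm c)ᵀ
      = vecMulVec (fun r => (clusterSize c r : ℝ)) (fun _ => 1) - scalar _ (-((n : ℝ) - 2)) := by
  ext r s
  rw [Matrix.mul_apply]
  simp only [diagonal_mul, transpose_apply]
  rw [sum_sym2_mem r]
  swap
  · intro b hb
    simp [Wm, dg_zero c r b hb]
  have h1 : ∀ t, (clusterSize c r : ℝ) * Wm c r s(r, t) * Wm c s s(r, t)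
      = (if t = r then 2 else 1) * dg c s s(r, t) := by
    intro t
    have hp := blk_pos c hsz s(r, t)
    have hs : Real.sqrt (blkSize c s(r, t)) * Real.sqrt (blkSize c s(r, t)) = blkSize c s(r, t) :=
      Real.mul_self_sqrt hp.le
    calc (clusterSize c r : ℝ) * Wm c r s(r, t) * Wm c s s(r, t)
        = ((clusterSize c r : ℝ) * dg c r s(r, t)) * dg c s s(r, t)
          / (Real.sqrt (blkSize c s(r, t)) * Real.sqrt (blkSize c s(r, t))) := by
          simp only [Wm]; ring
      _ = _ := by
          rw [blk_mk, hs]; field_simp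
  simp only [h1]
  by_cases hrs : s = r
  · subst hrs
    have h2 : ∀ t, (if t = s then (2 : ℝ) else 1) * dg c s s(s, t)
        = (clusterSize c t : ℝ) + if t = s then ((clusterSize c s : ℝ) - 2) else 0 := by
      intro t
      rw [dg_mk]
      by_cases h : t = s
      · subst h; simp; ring
      · simp [h]
    simp only [h2, Finset.sum_add_distrib, sum_clusterSize]
    simp [vecMulVec_apply]
    ring
  · rw [Finset.sum_eq_single s]
    · rw [Sym2.eq_swap, dg_mk]
      simp [hrs, Ne.symm hrs, vecMulVec_apply]
    · intro t _ ht
      rw [dg_zero _ _ _ (by simp [hrs, Ne.symm ht]), mul_zero]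
    · simp

open Polynomial in
/-- For a partition of `[n]` into `k ≥ 1` clusters each of size at least `2`,
the matrix `M = Qᵀ A(L(K_n)) Q` has characteristic polynomial
`(X − (2n−4)) · (X − (n−4))^{k−1} · (X + 2)^{C(k,2)}`; that is, its eigenvalues are `2n−4`
(simple), `n−4` with multiplicity `k−1`, and `−2` with multiplicity `C(k,2)`. -/
theorem Mmat_charpoly {n k : ℕ} (hk : 1 ≤ k) (c : Fin n → Fin k)
    (hsz : ∀ r, 2 ≤ clusterSize c r) :
    (Mmat c).charpoly
      = (X - C (2 * (n : ℝ) - 4)) * (X - C ((n : ℝ) - 4)) ^ (k - 1)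
          * (X + C 2) ^ (k.choose 2) := by
  have hc : Fintype.card (Sym2 (Fin k)) = k.choose 2 + k := by
    rw [Sym2.card, Fintype.card_fin, Nat.choose_succ_succ' k 1]
    simp [add_comm]
  rw [Mmat_eq c hsz, charpoly_sub_scalar, charpoly_mul_comm_of_le _ _ (by simp [hc]), DWWt c hsz,
    charpoly_sub_scalar, charpoly_vecMulVec, hc]
  have hd : (fun r => (clusterSize c r : ℝ)) ⬝ᵥ (fun _ => 1) = n := by
    simp [dotProduct, sum_clusterSize]
  rw [hd]
  obtain ⟨m, rfl⟩ : ∃ m, k = m + 1 := ⟨k - 1, by omega⟩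
  simp only [Fintype.card_fin, Nat.add_sub_cancel, smul_eq_C_mul, mul_comp, sub_comp, pow_comp,
    X_comp, C_comp, add_comp]
  have e1 : (X + C 2 + C (-((n : ℝ) - 2)) : ℝ[X]) = X - C ((n : ℝ) - 4) := by
    rw [add_assoc, ← C_add, sub_eq_add_neg X, ← C_neg]
    congr 2; ring
  have e2 : (X - C (2 * (n : ℝ) - 4) : ℝ[X]) = X - C ((n : ℝ) - 4) - C (n : ℝ) := by
    rw [sub_sub, ← C_add]
    congr 2; ring
  rw [e1, e2, pow_succ]
  ring
end
end

section
/- Let [n] be partitioned into clusters C_1,…,C_k with |C_r| = n_r ≥ 2, and let M = Qᵀ A(L(K_n)) Q where Q is the associated block-indicator matrix. Then rank(M + 2·I_{C(k+1,2)}) = k; equivalently, the nullity of M + 2I equals C(k+1,2) − k = C(k,2). -/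
open scoped Classical
open Matrix

noncomputable section

variable {n k : ℕ}

/-- Vertex-edge incidence matrix. -/
def Binc (n : ℕ) : Matrix (Fin n) (CompleteEdge n) ℝ :=
  fun v e => if v ∈ e.1 then 1 else 0

lemma Binc_gram (n : ℕ) : (Binc n)ᵀ * Binc n = ALK n + (2 : ℝ) • 1 := by
  ext e f
  obtain ⟨a, b, he⟩ : ∃ a b, e.1 = s(a, b) := by
    induction h : e.1 using Sym2.ind with | _ a b => exact ⟨a, b, rfl⟩
  obtain ⟨x, y, hf⟩ : ∃ a b, f.1 = s(a, b) := by
    induction h : f.1 using Sym2.ind with | _ a b => exact ⟨a, b, rfl⟩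
  have hab : a ≠ b := by simpa [he] using e.2
  have hxy : x ≠ y := by simpa [hf] using f.2
  have key : ((Binc n)ᵀ * Binc n) e f =
      (if a = x ∨ a = y then (1 : ℝ) else 0) + (if b = x ∨ b = y then (1 : ℝ) else 0) := by
    have : ∀ v, (Binc n)ᵀ e v * Binc n v f =
        (if v = a then (if v = x ∨ v = y then (1 : ℝ) else 0) else 0) +
        (if v = b then (if v = x ∨ v = y then (1 : ℝ) else 0) else 0) := by
      intro v
      simp only [Binc, transpose_apply, he, hf, Sym2.mem_iff]
      by_cases h1 : v = a
      · simp [h1, hab]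
      · by_cases h2 : v = b
        · simp [h2, hab.symm]
        · simp [h1, h2]
    rw [Matrix.mul_apply, Finset.sum_congr rfl (fun v _ => this v), Finset.sum_add_distrib]
    simp
  rw [key]
  have hex : (∃ v, v ∈ e.1 ∧ v ∈ f.1) ↔ (a = x ∨ a = y) ∨ (b = x ∨ b = y) := by
    simp [he, hf, Sym2.mem_iff, or_and_right, exists_or]
  have heq : e = f ↔ (a = x ∧ b = y) ∨ (a = y ∧ b = x) := by
    rw [← Sym2.eq_iff, ← he, ← hf]
    exact Subtype.ext_iff
  simp only [ALK, Matrix.add_apply, Matrix.smul_apply, Matrix.one_apply, Ne, heq, hex, smul_eq_mul]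
  by_cases h1 : a = x <;> by_cases h2 : a = y <;> by_cases h3 : b = x <;> by_cases h4 : b = y <;>
    simp [h1, h2, h3, h4] <;> grind

lemma exists_two {n k : ℕ} (c : Fin n → Fin k) (hsz : ∀ r, 2 ≤ clusterSize c r) (r : Fin k) :
    ∃ i j, i ≠ j ∧ c i = r ∧ c j = r := by
  obtain ⟨i, hi, j, hj, hij⟩ := Finset.one_lt_card.1 (hsz r)
  simp at hi hj
  exact ⟨i, j, hij, hi, hj⟩

lemma exists_edge {n k : ℕ} (c : Fin n → Fin k) (hsz : ∀ r, 2 ≤ clusterSize c r)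
    (b : Sym2 (Fin k)) : ∃ e : CompleteEdge n, blkOf c e = b := by
  induction b using Sym2.ind with | _ r s =>
  by_cases h : r = s
  · obtain ⟨i, j, hij, hi, hj⟩ := exists_two c hsz r
    exact ⟨⟨s(i, j), by simpa using hij⟩, by simp [blkOf, hi, hj, h]⟩
  · obtain ⟨i, -, -, hi, -⟩ := exists_two c hsz r
    obtain ⟨j, -, -, hj, -⟩ := exists_two c hsz s
    exact ⟨⟨s(i, j), by simp; rintro rfl; exact h (hi.symm.trans hj)⟩, by simp [blkOf, hi, hj]⟩

lemma blkSize_pos {n k : ℕ} (c : Fin n → Fin k) (hsz : ∀ r, 2 ≤ clusterSize c r)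
    (b : Sym2 (Fin k)) : 0 < blkSize c b := by
  obtain ⟨e, he⟩ := exists_edge c hsz b
  exact Finset.card_pos.2 ⟨e, by simp [he]⟩

lemma Qmat_gram {n k : ℕ} (c : Fin n → Fin k) (hsz : ∀ r, 2 ≤ clusterSize c r) :
    (Qmat c)ᵀ * Qmat c = 1 := by
  ext b b'
  rw [Matrix.mul_apply, Matrix.one_apply]
  simp only [transpose_apply, Qmat]
  split_ifs with h
  · subst h
    have hp : (0 : ℝ) < blkSize c b := by exact_mod_cast blkSize_pos c hsz b
    have : ∀ e : CompleteEdge n, (if blkOf c e = b then 1 / Real.sqrt (blkSize c b) else 0) *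
      (if blkOf c e = b then 1 / Real.sqrt (blkSize c b) else 0) =
      if blkOf c e = b then 1 / (blkSize c b : ℝ) else 0 := by
      intro e
      split_ifs
      · rw [div_mul_div_comm, Real.mul_self_sqrt hp.le, one_mul]
      · simp
    rw [Finset.sum_congr rfl (fun e _ => this e), ← Finset.sum_filter, Finset.sum_const,
      nsmul_eq_mul]
    change (blkSize c b : ℝ) * _ = 1
    field_simp
  · apply Finset.sum_eq_zero
    intro e _
    by_cases h1 : blkOf c e = b
    · have h2 : blkOf c e ≠ b' := fun h2 => h (h1.symm.trans h2)
      simp [h2]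
    · simp [h1]

/-- Permutation of the edges induced by a permutation of the vertices. -/
def edgePerm {n : ℕ} (p : Equiv.Perm (Fin n)) : Equiv.Perm (CompleteEdge n) where
  toFun e := ⟨Sym2.map p e.1, by rw [Sym2.isDiag_map p.injective]; exact e.2⟩
  invFun e := ⟨Sym2.map p.symm e.1, by rw [Sym2.isDiag_map p.symm.injective]; exact e.2⟩
  left_inv e := Subtype.ext (by simp [Sym2.map_map])
  right_inv e := Subtype.ext (by simp [Sym2.map_map])

lemma BQ_congr {n k : ℕ} (c : Fin n → Fin k) (v w : Fin n) (h : c v = c w) (b : Sym2 (Fin k)) :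
    (Binc n * Qmat c) v b = (Binc n * Qmat c) w b := by
  rw [Matrix.mul_apply, Matrix.mul_apply]
  refine Fintype.sum_equiv (edgePerm (Equiv.swap v w)) _ _ ?_
  rintro ⟨e, he⟩
  induction e using Sym2.ind with | _ x y =>
  have hc : ∀ u, c (Equiv.swap v w u) = c u := by
    intro u
    rw [Equiv.swap_apply_def]
    split_ifs with h1 h2
    · rw [h1, h]
    · rw [h2, h]
    · rfl
  have hm : ∀ u, (w = Equiv.swap v w u) ↔ v = u := by
    intro u
    rw [Equiv.swap_apply_def]
    split_ifs <;> grind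
  have h1 : Binc n w (edgePerm (Equiv.swap v w) ⟨s(x, y), he⟩) = Binc n v ⟨s(x, y), he⟩ := by
    change (if w ∈ s(Equiv.swap v w x, Equiv.swap v w y) then (1 : ℝ) else 0) =
      if v ∈ s(x, y) then 1 else 0
    simp only [Sym2.mem_iff, hm]
  have h2 : blkOf c (edgePerm (Equiv.swap v w) ⟨s(x, y), he⟩) = blkOf c ⟨s(x, y), he⟩ := by
    change s(c (Equiv.swap v w x), c (Equiv.swap v w y)) = s(c x, c y)
    rw [hc, hc]
  rw [h1]
  simp only [Qmat, h2]

lemma BQ_diag_zero {n k : ℕ} (c : Fin n → Fin k) (v : Fin n) (r : Fin k) (h : c v ≠ r) :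
    (Binc n * Qmat c) v s(r, r) = 0 := by
  rw [Matrix.mul_apply]
  apply Finset.sum_eq_zero
  rintro ⟨e, he⟩ _
  induction e using Sym2.ind with | _ x y =>
  simp only [Binc, Qmat, blkOf, Sym2.mem_iff, Sym2.map_mk]
  by_cases h1 : v = x ∨ v = y
  · have : s(c x, c y) ≠ s(r, r) := by
      rw [Ne, Sym2.eq_iff]
      grind
    simp [this]
  · simp [h1]

lemma BQ_diag_pos {n k : ℕ} (c : Fin n → Fin k) (hsz : ∀ r, 2 ≤ clusterSize c r)
    (v : Fin n) : 0 < (Binc n * Qmat c) v s(c v, c v) := by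
  have hp : (0 : ℝ) < blkSize c s(c v, c v) := by exact_mod_cast blkSize_pos c hsz _
  obtain ⟨j, hj, hc⟩ : ∃ j, v ≠ j ∧ c j = c v := by
    obtain ⟨i, j, hij, hi, hj⟩ := exists_two c hsz (c v)
    by_cases h : v = i
    · exact ⟨j, h ▸ hij, hj⟩
    · exact ⟨i, h, hi⟩
  rw [Matrix.mul_apply]
  apply Finset.sum_pos'
  · intro e _
    simp only [Binc, Qmat]
    split_ifs <;> positivity
  · refine ⟨⟨s(v, j), by simpa using hj⟩, Finset.mem_univ _, ?_⟩
    simp only [Binc, Qmat, blkOf, Sym2.map_mk, hc]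
    simpa using hp

/-- For a partition of `[n]` into clusters each of size at least `2`, the
matrix `M + 2I` (with `M = Qᵀ A(L(K_n)) Q` of order `C(k+1,2)`) has rank `k`; equivalently
its nullity is `C(k+1,2) − k = C(k,2)`. -/
theorem Mmat_add_two_rank {n k : ℕ} (c : Fin n → Fin k)
    (hsz : ∀ r, 2 ≤ clusterSize c r) :
    (Mmat c + (2 : ℝ) • (1 : Matrix (Sym2 (Fin k)) (Sym2 (Fin k)) ℝ)).rank = k := by
  have hM : Mmat c + (2 : ℝ) • (1 : Matrix (Sym2 (Fin k)) (Sym2 (Fin k)) ℝ) =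
      (Binc n * Qmat c)ᵀ * (Binc n * Qmat c) := by
    rw [Matrix.transpose_mul, Matrix.mul_assoc, ← Matrix.mul_assoc (Binc n)ᵀ, Binc_gram,
      Matrix.add_mul, Matrix.mul_add, Matrix.smul_mul, Matrix.one_mul, Matrix.mul_smul,
      Qmat_gram c hsz, Mmat, Matrix.mul_assoc]
  rw [hM, Matrix.rank_transpose_mul_self]
  choose σ τ hστ hσ hτ using exists_two c hsz
  apply le_antisymm
  · have hf : Binc n * Qmat c = (Matrix.of fun (v : Fin n) (r : Fin k) =>
        if c v = r then (1 : ℝ) else 0) * ((Binc n * Qmat c).submatrix σ id) := by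
      ext v b
      rw [Matrix.mul_apply (M := Matrix.of _)]
      simp [BQ_congr c v (σ (c v)) (hσ _).symm b]
    rw [hf]
    refine (Matrix.rank_mul_le_right _ _).trans ((Matrix.rank_le_card_height _).trans ?_)
    simp
  · have hd : (Binc n * Qmat c).submatrix σ (fun r => s(r, r)) =
        Matrix.diagonal (fun r => (Binc n * Qmat c) (σ r) s(r, r)) := by
      ext r s
      rw [Matrix.diagonal_apply]
      split_ifs with h
      · subst h; rfl
      · exact BQ_diag_zero c _ _ (by rw [hσ]; exact h)
    have hr : ((Binc n * Qmat c).submatrix σ (fun r => s(r, r))).rank = k := by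
      rw [hd, Matrix.rank_of_isUnit]
      · simp
      · rw [Matrix.isUnit_diagonal, Pi.isUnit_iff]
        intro r
        have := BQ_diag_pos c hsz (σ r)
        rw [hσ] at this
        exact this.ne'.isUnit
    calc k = _ := hr.symm
      _ ≤ _ := Matrix.rank_submatrix_le _ _ _
end
end

section
/- Let n, m be nonnegative integers with m + n ≥ 1, p ∈ [0,1], let X ~ Binomial(n,p) and Y ~ Binomial(m,p) be independent, and let Z = X/√(X+Y), with the convention Z = 0 when X + Y = 0. Then E[Z] = (n/(m+n)) · E[√T], where T ~ Binomial(m+n, p). Equivalently, ∑_{j=0}^{n} ∑_{k=0}^{m} C(n,j)·C(m,k)·(j/√(j+k))·p^{j+k}·(1−p)^{m+n−j−k} = (n/(m+n)) · ∑_{t=0}^{m+n} C(m+n,t)·√t·p^t·(1−p)^{m+n−t}. -/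
open MeasureTheory ProbabilityTheory

noncomputable section


lemma vand_aux (n m t : ℕ) :
    (m + n) * ∑ x ∈ Finset.HasAntidiagonal.antidiagonal t, x.1 * (n.choose x.1 * m.choose x.2)
      = n * (t * (m + n).choose t) := by
  rcases t with _ | s
  · simp
  rcases n with _ | n
  · simp only [zero_mul, mul_eq_zero]
    right
    apply Finset.sum_eq_zero
    rintro ⟨a, b⟩ _
    rcases a with _ | a <;> simp
  rw [Finset.Nat.antidiagonal_succ]
  simp only [Finset.sum_cons, Finset.sum_map, zero_mul, zero_add, Function.Embedding.prodMap,
    Function.Embedding.coeFn_mk, Prod.map, Function.Embedding.refl_apply, Nat.succ_eq_add_one]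
  have h : ∀ x ∈ Finset.HasAntidiagonal.antidiagonal s,
      (x.1 + 1) * ((n + 1).choose (x.1 + 1) * m.choose x.2)
        = (n + 1) * (n.choose x.1 * m.choose x.2) := by
    intro x _
    have := Nat.add_one_mul_choose_eq n x.1
    rw [← mul_assoc, mul_comm (x.1 + 1), ← this, mul_assoc]
  rw [Finset.sum_congr rfl h, ← Finset.mul_sum, ← Nat.add_choose_eq]
  have := Nat.add_one_mul_choose_eq (n + m) s
  rw [show m + (n + 1) = n + m + 1 by ring, mul_comm (s + 1), ← this]
  ring

lemma sum_aux (n m : ℕ) (hnm : 1 ≤ m + n) (p : ℝ) :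
    ∑ x ∈ Finset.range (n + 1) ×ˢ Finset.range (m + 1),
      ((n.choose x.1 : ℝ) * p ^ x.1 * (1 - p) ^ (n - x.1)) *
      ((m.choose x.2 : ℝ) * p ^ x.2 * (1 - p) ^ (m - x.2)) *
      ((x.1 : ℝ) / Real.sqrt ((x.1 : ℝ) + (x.2 : ℝ)))
    = ((n : ℝ) / ((m : ℝ) + (n : ℝ))) *
        ∑ t ∈ Finset.range (m + n + 1),
          ((m + n).choose t : ℝ) * Real.sqrt t * p ^ t * (1 - p) ^ (m + n - t) := by
  have hpos : (0 : ℝ) < (m : ℝ) + n := by exact_mod_cast hnm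
  rw [← Finset.sum_fiberwise_of_maps_to (s := Finset.range (n + 1) ×ˢ Finset.range (m + 1))
    (t := Finset.range (m + n + 1)) (g := fun x => x.1 + x.2)
    (by intro x hx; simp only [Finset.mem_product, Finset.mem_range] at hx ⊢; omega),
    Finset.mul_sum]
  refine Finset.sum_congr rfl fun t _ => ?_
  have h1 : ∀ x ∈ (Finset.range (n + 1) ×ˢ Finset.range (m + 1)).filter
      (fun x => x.1 + x.2 = t),
      ((n.choose x.1 : ℝ) * p ^ x.1 * (1 - p) ^ (n - x.1)) *
      ((m.choose x.2 : ℝ) * p ^ x.2 * (1 - p) ^ (m - x.2)) *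
      ((x.1 : ℝ) / Real.sqrt ((x.1 : ℝ) + (x.2 : ℝ)))
      = ((x.1 * (n.choose x.1 * m.choose x.2) : ℕ) : ℝ) *
        (p ^ t * (1 - p) ^ (m + n - t) / Real.sqrt t) := by
    rintro ⟨j, k⟩ hx
    simp only [Finset.mem_filter, Finset.mem_product, Finset.mem_range] at hx ⊢
    obtain ⟨⟨hj, hk⟩, rfl⟩ := hx
    rw [show m + n - (j + k) = (n - j) + (m - k) by omega, pow_add, pow_add]
    push_cast
    ring
  rw [Finset.sum_congr rfl h1, ← Finset.sum_mul]
  have h2 : ∑ x ∈ (Finset.range (n + 1) ×ˢ Finset.range (m + 1)).filter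
      (fun x => x.1 + x.2 = t), ((x.1 * (n.choose x.1 * m.choose x.2) : ℕ) : ℝ)
      = ((∑ x ∈ Finset.HasAntidiagonal.antidiagonal t, x.1 * (n.choose x.1 * m.choose x.2) : ℕ) : ℝ) := by
    rw [Nat.cast_sum]
    apply Finset.sum_subset
    · intro x hx
      simp only [Finset.mem_filter] at hx
      simpa using hx.2
    · rintro ⟨j, k⟩ hx hx'
      simp only [Finset.mem_filter, Finset.mem_product, Finset.mem_range,
        Finset.HasAntidiagonal.mem_antidiagonal] at hx hx'
      rcases lt_or_ge n j with h | h
      · simp [Nat.choose_eq_zero_of_lt h]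
      · have : m < k := by omega
        simp [Nat.choose_eq_zero_of_lt this]
  rw [h2]
  have h3 : ((m : ℝ) + n) * ((∑ x ∈ Finset.HasAntidiagonal.antidiagonal t,
      x.1 * (n.choose x.1 * m.choose x.2) : ℕ) : ℝ) = n * (t * ((m + n).choose t : ℝ)) := by
    exact_mod_cast vand_aux n m t
  generalize ((∑ x ∈ Finset.HasAntidiagonal.antidiagonal t,
      x.1 * (n.choose x.1 * m.choose x.2) : ℕ) : ℝ) = S at h3
  have hS : S = n * (t * ((m + n).choose t : ℝ)) / ((m : ℝ) + n) := by
    field_simp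
    linarith
  have h4 : (t : ℝ) / Real.sqrt t = Real.sqrt t := Real.div_sqrt
  rw [hS]
  calc _ = (n : ℝ) / (m + n) * (((m + n).choose t : ℝ) * ((t : ℝ) / Real.sqrt t) * p ^ t *
        (1 - p) ^ (m + n - t)) := by ring
    _ = _ := by rw [h4]

lemma ae_le_aux {Ω : Type} [MeasurableSpace Ω] (Pr : Measure Ω) (X : Ω → ℕ) (n : ℕ) (p : ℝ)
    (hlawX : ∀ j : ℕ, Pr {ω | X ω = j}
      = ENNReal.ofReal ((n.choose j : ℝ) * p ^ j * (1 - p) ^ (n - j))) :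
    ∀ᵐ ω ∂Pr, X ω ≤ n := by
  have : ∀ j : ℕ, ∀ᵐ ω ∂Pr, n < j → X ω ≠ j := by
    intro j
    by_cases h : n < j
    · have h0 := hlawX j
      rw [Nat.choose_eq_zero_of_lt h] at h0
      simp only [Nat.cast_zero, zero_mul, ENNReal.ofReal_zero] at h0
      rw [ae_iff]
      simpa [h] using h0
    · simp [h]
  filter_upwards [ae_all_iff.2 this] with ω h
  by_contra hc
  exact h (X ω) (by omega) rfl

/-- Let `X ~ Binomial(n,p)` and `Y ~ Binomial(m,p)` be independent and
`Z = X/√(X+Y)` (with `Z = 0` when `X+Y = 0`).  Then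
`E[Z] = (n/(m+n)) · E[√T]` with `T ~ Binomial(m+n,p)`, i.e.
`E[Z] = (n/(m+n)) · ∑_{t=0}^{m+n} C(m+n,t) √t p^t (1−p)^{m+n−t}`. -/
theorem dampedBinomial_first_moment (n m : ℕ) (hnm : 1 ≤ m + n) (p : ℝ)
    (hp : p ∈ Set.Icc (0 : ℝ) 1)
    (Ω : Type) [MeasurableSpace Ω] (Pr : Measure Ω) [IsProbabilityMeasure Pr]
    (X Y : Ω → ℕ) (hX : Measurable X) (hY : Measurable Y)
    (hind : IndepFun X Y Pr)
    (hlawX : ∀ j : ℕ, Pr {ω | X ω = j}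
      = ENNReal.ofReal ((n.choose j : ℝ) * p ^ j * (1 - p) ^ (n - j)))
    (hlawY : ∀ j : ℕ, Pr {ω | Y ω = j}
      = ENNReal.ofReal ((m.choose j : ℝ) * p ^ j * (1 - p) ^ (m - j))) :
    ∫ ω, ((X ω : ℝ) / Real.sqrt ((X ω : ℝ) + (Y ω : ℝ))) ∂Pr
      = ((n : ℝ) / ((m : ℝ) + (n : ℝ))) *
        ∑ t ∈ Finset.range (m + n + 1),
          ((m + n).choose t : ℝ) * Real.sqrt t * p ^ t * (1 - p) ^ (m + n - t) := by
  obtain ⟨hp0, hp1⟩ := hp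
  have hq : 0 ≤ 1 - p := by linarith
  rw [← sum_aux n m hnm p]
  have hms : ∀ x : ℕ × ℕ, MeasurableSet (X ⁻¹' {x.1} ∩ Y ⁻¹' {x.2}) := fun x =>
    (hX (measurableSet_singleton _)).inter (hY (measurableSet_singleton _))
  have hae : (fun ω => (X ω : ℝ) / Real.sqrt ((X ω : ℝ) + (Y ω : ℝ))) =ᵐ[Pr]
      fun ω => ∑ x ∈ Finset.range (n + 1) ×ˢ Finset.range (m + 1),
        (X ⁻¹' {x.1} ∩ Y ⁻¹' {x.2}).indicator
          (fun _ => (x.1 : ℝ) / Real.sqrt ((x.1 : ℝ) + (x.2 : ℝ))) ω := by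
    filter_upwards [ae_le_aux Pr X n p hlawX, ae_le_aux Pr Y m p hlawY] with ω h1 h2
    rw [Finset.sum_eq_single (X ω, Y ω)]
    · simp
    · rintro ⟨j, k⟩ _ hne
      apply Set.indicator_of_notMem
      rintro ⟨ha, hb⟩
      simp only [Set.mem_preimage, Set.mem_singleton_iff] at ha hb
      exact hne (by rw [ha, hb])
    · intro h
      simp only [Finset.mem_product, Finset.mem_range] at h
      omega
  rw [integral_congr_ae hae, integral_finsetSum]
  · refine Finset.sum_congr rfl fun x _ => ?_
    rw [integral_indicator_const _ (hms x), smul_eq_mul, measureReal_def,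
      hind.measure_inter_preimage_eq_mul _ _ (measurableSet_singleton _)
        (measurableSet_singleton _)]
    have e1 : Pr (X ⁻¹' {x.1}) = _ := hlawX x.1
    have e2 : Pr (Y ⁻¹' {x.2}) = _ := hlawY x.2
    rw [e1, e2, ENNReal.toReal_mul, ENNReal.toReal_ofReal (by positivity),
      ENNReal.toReal_ofReal (by positivity)]
  · intro x _
    exact (integrable_const _).indicator (hms x)
end
end

section
/- Let n, m be nonnegative integers with m + n ≥ 2, p ∈ [0,1], let X ~ Binomial(n,p) and Y ~ Binomial(m,p) be independent, and let Z = X/√(X+Y), with the convention Z = 0 when X + Y = 0. Then E[Z²] = (n(n−1)/((m+n)(m+n−1)))·(m+n)·p + (n·m/((m+n)(m+n−1)))·(1 − (1−p)^{m+n}). -/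
open MeasureTheory ProbabilityTheory

noncomputable section

lemma vand (n m s : ℕ) : ∑ x ∈ Finset.HasAntidiagonal.antidiagonal s, (n.choose x.1 : ℝ) * (m.choose x.2)
    = ((n + m).choose s : ℝ) := by
  rw [Nat.add_choose_eq]; push_cast; rfl

lemma shift_sum (n m s : ℕ) (g : ℕ → ℝ) :
    ∑ x ∈ Finset.HasAntidiagonal.antidiagonal (s+1), g x.1 * x.1 * ((n+1).choose x.1 : ℝ) * (m.choose x.2)
    = (n+1) * ∑ x ∈ Finset.HasAntidiagonal.antidiagonal s, g (x.1+1) * ((n.choose x.1 : ℝ) * (m.choose x.2)) := by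
  rw [Finset.Nat.sum_antidiagonal_succ, Finset.mul_sum]
  simp only [Nat.cast_zero, mul_zero, zero_mul, zero_add]
  refine Finset.sum_congr rfl fun x _ => ?_
  have h : ((n:ℝ)+1) * n.choose x.1 = (n+1).choose (x.1+1) * (x.1+1) := by
    exact_mod_cast Nat.add_one_mul_choose_eq n x.1
  push_cast
  linear_combination (-g (x.1+1) * m.choose x.2) * h

lemma first_mom (n m s : ℕ) :
    ∑ x ∈ Finset.HasAntidiagonal.antidiagonal s, (x.1 : ℝ) * (n.choose x.1 : ℝ) * (m.choose x.2) * (n + m)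
    = n * s * ((n + m).choose s : ℝ) := by
  rcases s with _ | s
  · simp
  rcases n with _ | n
  · simp only [Nat.cast_zero, zero_mul]
    refine Finset.sum_eq_zero fun x _ => ?_
    rcases x with ⟨_ | a, b⟩ <;> simp
  have h := shift_sum n m s (fun _ => 1)
  simp only [one_mul] at h
  rw [← Finset.sum_mul, h, vand]
  have h : ((n:ℝ)+m+1) * (n+m).choose s = (n+m+1).choose (s+1) * (s+1) := by
    exact_mod_cast Nat.add_one_mul_choose_eq (n+m) s
  rw [show n + 1 + m = n + m + 1 by ring]
  push_cast
  linear_combination (n+1) * h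

lemma second_mom (n m s : ℕ) (hnm : 2 ≤ m + n) :
    (∑ x ∈ Finset.HasAntidiagonal.antidiagonal s, (x.1 : ℝ) ^ 2 * (n.choose x.1 : ℝ) * (m.choose x.2))
      * ((n + m) * (n + m - 1))
    = (n * (n - 1) * s * s + n * m * s) * ((n + m).choose s : ℝ) := by
  rcases s with _ | s
  · simp
  rcases n with _ | n
  · simp only [Nat.cast_zero, zero_mul, add_zero]
    rw [Finset.sum_eq_zero, zero_mul]
    intro x _
    rcases x with ⟨_ | a, b⟩ <;> simp
  have h := shift_sum n m s (fun i => (i:ℝ))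
  simp only [pow_two]
  rw [h]
  have h2 := first_mom n m s
  rw [← Finset.sum_mul] at h2
  have h3 : ∑ x ∈ Finset.HasAntidiagonal.antidiagonal s, ((x.1 + 1 : ℕ) : ℝ) * ((n.choose x.1 : ℝ) * (m.choose x.2))
     = ∑ x ∈ Finset.HasAntidiagonal.antidiagonal s, (x.1 : ℝ) * (n.choose x.1 : ℝ) * (m.choose x.2)
       + ((n + m).choose s : ℝ) := by
    rw [← vand, ← Finset.sum_add_distrib]
    refine Finset.sum_congr rfl fun x _ => ?_
    push_cast; ring
  rw [h3]
  have h : ((n:ℝ)+m+1) * (n+m).choose s = (n+m+1).choose (s+1) * (s+1) := by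
    exact_mod_cast Nat.add_one_mul_choose_eq (n+m) s
  rw [show n + 1 + m = n + m + 1 by ring]
  push_cast
  linear_combination (n+1) * (n+m+1) * h2 + ((n:ℝ)+1) * (n * s + n+m) * h

lemma binom_mean (N : ℕ) (p : ℝ) :
    ∑ s ∈ Finset.range (N+1), p ^ s * (1-p) ^ (N-s) * (N.choose s : ℝ) * s = N * p := by
  rcases N with _ | N
  · simp
  rw [Finset.sum_range_succ']
  have := add_pow p (1-p) N
  simp only [add_sub_cancel, one_pow] at this
  have h2 : ((N+1 : ℕ) : ℝ) * p = (N+1) * p *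
      ∑ k ∈ Finset.range (N+1), p ^ k * (1-p) ^ (N-k) * (N.choose k : ℝ) := by
    rw [← this]; push_cast; ring
  rw [h2]
  rw [Finset.mul_sum]
  simp only [Nat.cast_zero, mul_zero, add_zero]
  refine Finset.sum_congr rfl fun s _ => ?_
  have h : ((N:ℝ)+1) * N.choose s = (N+1).choose (s+1) * (s+1) := by
    exact_mod_cast Nat.add_one_mul_choose_eq N s
  rw [Nat.add_sub_add_right]
  push_cast
  linear_combination (- p ^ (s+1) * (1-p)^(N-s)) * h

lemma binom_pos (N : ℕ) (p : ℝ) :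
    ∑ s ∈ Finset.range (N+1), p ^ s * (1-p) ^ (N-s) * (N.choose s : ℝ) * (if s = 0 then 0 else 1)
      = 1 - (1-p)^N := by
  have := add_pow p (1-p) N
  simp only [add_sub_cancel, one_pow] at this
  rw [Finset.sum_range_succ'] at this ⊢
  simp at this ⊢
  linarith

lemma finite_id (n m : ℕ) (hnm : 2 ≤ m + n) (p : ℝ) :
    ∑ s ∈ Finset.range (n+m+1), ∑ x ∈ Finset.HasAntidiagonal.antidiagonal s,
      ((n.choose x.1 : ℝ) * p ^ x.1 * (1 - p) ^ (n - x.1)) *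
      ((m.choose x.2 : ℝ) * p ^ x.2 * (1 - p) ^ (m - x.2)) *
      ((x.1 : ℝ)^2 / ((x.1 : ℝ) + x.2))
      = ((n : ℝ) * ((n : ℝ) - 1) / (((m : ℝ) + n) * ((m : ℝ) + n - 1)))
            * (((m : ℝ) + n) * p)
        + ((n : ℝ) * m / (((m : ℝ) + n) * ((m : ℝ) + n - 1)))
            * (1 - (1 - p) ^ (m + n)) := by
  have hN : (2:ℝ) ≤ m + n := by exact_mod_cast hnm
  have hN0 : ((m:ℝ) + n) ≠ 0 := by linarith
  have hN1 : ((m:ℝ) + n - 1) ≠ 0 := by linarith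
  have e1 := binom_mean (n+m) p
  have e2 := binom_pos (n+m) p
  rw [add_comm m n, ← e2, show ((m:ℝ) + n) * p = ((n+m : ℕ) : ℝ) * p by push_cast; ring, ← e1,
    Finset.mul_sum, Finset.mul_sum, ← Finset.sum_add_distrib]
  refine Finset.sum_congr rfl fun s _ => ?_
  have key : ∀ x ∈ Finset.HasAntidiagonal.antidiagonal s,
      ((n.choose x.1 : ℝ) * p ^ x.1 * (1 - p) ^ (n - x.1)) *
      ((m.choose x.2 : ℝ) * p ^ x.2 * (1 - p) ^ (m - x.2)) *
      ((x.1 : ℝ)^2 / ((x.1 : ℝ) + x.2)) =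
      ((x.1 : ℝ) ^ 2 * (n.choose x.1 : ℝ) * (m.choose x.2)) *
        (p ^ s * (1-p) ^ (n+m-s) / s) := by
    rintro ⟨i, j⟩ hx
    obtain rfl := Finset.HasAntidiagonal.mem_antidiagonal.mp hx
    dsimp only
    by_cases hi : i ≤ n
    · by_cases hj : j ≤ m
      · rw [show n + m - (i + j) = (n - i) + (m - j) by omega, pow_add, pow_add]
        push_cast
        ring
      · simp [Nat.choose_eq_zero_of_lt (not_le.mp hj)]
    · simp [Nat.choose_eq_zero_of_lt (not_le.mp hi)]
  rw [Finset.sum_congr rfl key, ← Finset.sum_mul]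
  have h2 := second_mom n m s hnm
  rcases s with _ | s
  · simp
  have hs : ((s + 1 : ℕ) : ℝ) ≠ 0 := by positivity
  rw [← eq_div_iff (by rw [add_comm (n:ℝ)]; exact mul_ne_zero hN0 hN1)] at h2
  rw [h2, add_comm (n:ℝ), if_neg (Nat.succ_ne_zero s)]
  field_simp

/-- Let `X ~ Binomial(n,p)` and `Y ~ Binomial(m,p)` be independent and
`Z = X/√(X+Y)` (with `Z = 0` when `X+Y = 0`), `m + n ≥ 2`.  Then
`E[Z²] = (n(n−1)/((m+n)(m+n−1)))·(m+n)·p + (n·m/((m+n)(m+n−1)))·(1 − (1−p)^{m+n})`. -/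
theorem dampedBinomial_second_moment (n m : ℕ) (hnm : 2 ≤ m + n) (p : ℝ)
    (hp : p ∈ Set.Icc (0 : ℝ) 1)
    (Ω : Type) [MeasurableSpace Ω] (Pr : Measure Ω) [IsProbabilityMeasure Pr]
    (X Y : Ω → ℕ) (hX : Measurable X) (hY : Measurable Y)
    (hind : IndepFun X Y Pr)
    (hlawX : ∀ j : ℕ, Pr {ω | X ω = j}
      = ENNReal.ofReal ((n.choose j : ℝ) * p ^ j * (1 - p) ^ (n - j)))
    (hlawY : ∀ j : ℕ, Pr {ω | Y ω = j}
      = ENNReal.ofReal ((m.choose j : ℝ) * p ^ j * (1 - p) ^ (m - j))) :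
    ∫ ω, ((X ω : ℝ) / Real.sqrt ((X ω : ℝ) + (Y ω : ℝ))) ^ 2 ∂Pr
      = ((n : ℝ) * ((n : ℝ) - 1) / (((m : ℝ) + n) * ((m : ℝ) + n - 1)))
            * (((m : ℝ) + n) * p)
        + ((n : ℝ) * m / (((m : ℝ) + n) * ((m : ℝ) + n - 1)))
            * (1 - (1 - p) ^ (m + n)) := by
  have hp0 : 0 ≤ p := hp.1
  have hq0 : 0 ≤ 1 - p := by linarith [hp.2]
  rw [← finite_id n m hnm p]
  have bd : ∀ (k : ℕ) (W : Ω → ℕ), (∀ j : ℕ, Pr {ω | W ω = j}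
      = ENNReal.ofReal ((k.choose j : ℝ) * p ^ j * (1 - p) ^ (k - j))) →
      ∀ᵐ ω ∂Pr, W ω ≤ k := by
    intro k W hW
    have : ∀ j : ℕ, ∀ᵐ ω ∂Pr, k < j → W ω ≠ j := by
      intro j
      by_cases hj : k < j
      · have h := hW j
        rw [Nat.choose_eq_zero_of_lt hj] at h
        simp only [Nat.cast_zero, zero_mul, ENNReal.ofReal_zero] at h
        rw [ae_iff]
        simpa [hj] using h
      · exact Filter.Eventually.of_forall fun ω h => absurd h hj
    filter_upwards [ae_all_iff.mpr this] with ω h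
    by_contra hc
    exact h (W ω) (not_le.mp hc) rfl
  have hms : ∀ i j : ℕ, MeasurableSet (X ⁻¹' {i} ∩ Y ⁻¹' {j}) := fun i j =>
    (hX (measurableSet_singleton i)).inter (hY (measurableSet_singleton j))
  have hae : (fun ω => ((X ω : ℝ) / Real.sqrt ((X ω : ℝ) + (Y ω : ℝ))) ^ 2) =ᵐ[Pr]
      fun ω => ∑ s ∈ Finset.range (n+m+1), ∑ x ∈ Finset.HasAntidiagonal.antidiagonal s,
        (X ⁻¹' {x.1} ∩ Y ⁻¹' {x.2}).indicator
          (fun _ => ((x.1 : ℝ)^2 / ((x.1 : ℝ) + x.2))) ω := by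
    filter_upwards [bd n X hlawX, bd m Y hlawY] with ω h1 h2
    rw [Finset.sum_eq_single (X ω + Y ω), Finset.sum_eq_single (X ω, Y ω)]
    · rw [Set.indicator_of_mem (by simp), div_pow, Real.sq_sqrt (by positivity)]
    · rintro ⟨i, j⟩ _ hne
      refine Set.indicator_of_notMem ?_ _
      rintro ⟨h3, h4⟩
      exact hne (Prod.ext h3.symm h4.symm)
    · intro h; exact (h (by simp)).elim
    · intro s _ hne
      refine Finset.sum_eq_zero ?_
      rintro ⟨i, j⟩ hx
      refine Set.indicator_of_notMem ?_ _
      rintro ⟨h3, h4⟩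
      have h5 := Finset.HasAntidiagonal.mem_antidiagonal.mp hx
      simp only [Set.mem_preimage, Set.mem_singleton_iff] at h3 h4
      dsimp only at h5
      omega
    · intro h
      exact absurd (Finset.mem_range.mpr (by omega)) h
  have hint : ∀ x : ℕ × ℕ, Integrable ((X ⁻¹' {x.1} ∩ Y ⁻¹' {x.2}).indicator
          (fun _ => ((x.1 : ℝ)^2 / ((x.1 : ℝ) + x.2)))) Pr := fun x =>
    (integrable_const _).indicator (hms _ _)
  rw [integral_congr_ae hae, integral_finsetSum _ fun s _ =>
    integrable_finsetSum _ fun x _ => hint x]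
  refine Finset.sum_congr rfl fun s _ => ?_
  rw [integral_finsetSum _ fun x _ => hint x]
  refine Finset.sum_congr rfl fun x _ => ?_
  rw [integral_indicator_const _ (hms _ _), smul_eq_mul]
  congr 1
  rw [measureReal_def, hind.measure_inter_preimage_eq_mul _ _ (measurableSet_singleton _)
    (measurableSet_singleton _), ENNReal.toReal_mul]
  have a1 : Pr (X ⁻¹' {x.1}) = _ := hlawX x.1
  have a2 : Pr (Y ⁻¹' {x.2}) = _ := hlawY x.2
  rw [a1, a2, ENNReal.toReal_ofReal (by positivity), ENNReal.toReal_ofReal (by positivity)]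
end
end
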